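/- arXiv:2510.17107 — 2 statements merged into one kernel-verified Lean document; each statement's English description precedes it below -/
import Mathlib

section
/- (Separation of layers.) Let Q ∈ 𝒞 and n ∈ ℕ₀. Suppose Q₁ = B(x₁,r₁) is a ball of P^{(n)} and Q₂ = B(x₂,r₂) is a ball of 𝒞 belonging to the (n+4)-th layer, i.e. Q₂ ⊂ Q^{(n+4)} and Q₂ ⊄ Q^{(n+3)}. Then dist(Q₁, Q₂) ≥ max{κ(r₁ + r₂), 1}, where κ := √(1 + 2/η²) − 1. -/
open MeasureTheory Real Set Metric Filter
open scoped BigOperators ENNReal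

noncomputable section

/-- Three-dimensional Euclidean space. -/
abbrev E3 : Type := EuclideanSpace ℝ (Fin 3)

/-- The `i`-th standard basis vector of `ℝ³`. -/
def ev3 (i : Fin 3) : E3 := EuclideanSpace.single i (1 : ℝ)

/-- A (closed) ball, encoded by its center and its radius. -/
abbrev BallData : Type := E3 × ℝ

/-- The set of points of a ball. -/
def ballSet (B : BallData) : Set E3 := Metric.closedBall B.1 B.2

/-- The volume `(4π/3) r³` of a ball. -/
def ballVol (B : BallData) : ℝ := (4 * Real.pi / 3) * B.2 ^ 3

/-- A cover `𝒞 = 𝒞^{σ,η}` of `ℝ³` by closed balls of radius `≥ 1` (volume `≥ 4π/3`) such that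
(i) each ball intersects at most `σ` other balls of `𝒞`, and (ii) intersecting balls have
comparable sizes: `1/η ≤ |Q|^{1/3}/|Q'|^{1/3} ≤ η`. -/
structure IsCover (σ η : ℝ) (𝒞 : Set BallData) : Prop where
  radius_ge_one : ∀ B ∈ 𝒞, (1 : ℝ) ≤ B.2
  covers : ∀ x : E3, ∃ B ∈ 𝒞, x ∈ ballSet B
  overlap_finite : ∀ B ∈ 𝒞, {B' | B' ∈ 𝒞 ∧ B' ≠ B ∧ (ballSet B ∩ ballSet B').Nonempty}.Finite
  overlap_card : ∀ B ∈ 𝒞,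
    (({B' | B' ∈ 𝒞 ∧ B' ≠ B ∧ (ballSet B ∩ ballSet B').Nonempty}.ncard : ℝ)) ≤ σ
  comparable_lb : ∀ B ∈ 𝒞, ∀ B' ∈ 𝒞, (ballSet B ∩ ballSet B').Nonempty →
    1 / η ≤ ballVol B ^ ((1:ℝ)/3) / ballVol B' ^ ((1:ℝ)/3)
  comparable_ub : ∀ B ∈ 𝒞, ∀ B' ∈ 𝒞, (ballSet B ∩ ballSet B').Nonempty →
    ballVol B ^ ((1:ℝ)/3) / ballVol B' ^ ((1:ℝ)/3) ≤ η

/-- The union `Q^{(n)}` of the layers `0,…,n` of balls of `𝒞` around `Q`: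
`Q^{(0)} = Q` and `Q^{(n+1)} = ⋃ {B ∈ 𝒞 : B ∩ Q^{(n)} ≠ ∅}`. -/
def layerU (𝒞 : Set BallData) (Q : BallData) : ℕ → Set E3
  | 0 => ballSet Q
  | n + 1 => ⋃ B ∈ {B | B ∈ 𝒞 ∧ (ballSet B ∩ layerU 𝒞 Q n).Nonempty}, ballSet B

/-- The collection `P^{(n)}` of balls in layers `0` to `n`: `P^{(0)} = {Q}` and for `n ≥ 1`,
`P^{(n)} = {B ∈ 𝒞 : B ∩ Q^{(n-1)} ≠ ∅}`. -/
def PColl (𝒞 : Set BallData) (Q : BallData) : ℕ → Set BallData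
  | 0 => {Q}
  | n + 1 => {B | B ∈ 𝒞 ∧ (ballSet B ∩ layerU 𝒞 Q n).Nonempty}

/-- The union `S^{(n)}` of balls of the `n`-th layer: balls contained in `Q^{(n)}` but not
in `Q^{(n-1)}` (for `n ≥ 1`; `n - 1` is truncated subtraction). -/
def SLayer (𝒞 : Set BallData) (Q : BallData) (n : ℕ) : Set E3 :=
  ⋃ B ∈ {B | B ∈ 𝒞 ∧ ballSet B ⊆ layerU 𝒞 Q n ∧ ¬ ballSet B ⊆ layerU 𝒞 Q (n - 1)}, ballSet B

/-- Distance between two subsets of `ℝ³`. -/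
def setDistance (A B : Set E3) : ℝ := sInf {d : ℝ | ∃ a ∈ A, ∃ b ∈ B, d = dist a b}

variable {F : Type} [NormedAddCommGroup F] [NormedSpace ℝ F]

/-- The square of the Morrey-type norm `‖f‖_M`, i.e.
`‖f‖_M² = sup_{B ∈ 𝒞} |B|^{-2/3} ∫_B |f|²`. -/
def MnSq (𝒞 : Set BallData) (f : E3 → F) : ℝ :=
  sSup {a : ℝ | ∃ B ∈ 𝒞, a = ballVol B ^ (-(2:ℝ)/3) * ∫ x in ballSet B, ‖f x‖ ^ 2}

/-- Membership in the space `M = M^{2,2}_𝒞`. -/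
def MemM (𝒞 : Set BallData) (f : E3 → F) : Prop :=
  (∀ B ∈ 𝒞, IntegrableOn (fun x => ‖f x‖ ^ 2) (ballSet B) volume) ∧
  BddAbove {a : ℝ | ∃ B ∈ 𝒞, a = ballVol B ^ (-(2:ℝ)/3) * ∫ x in ballSet B, ‖f x‖ ^ 2}

/-- The Morrey-type norm `‖f‖_M`. -/
def Mn (𝒞 : Set BallData) (f : E3 → F) : ℝ := Real.sqrt (MnSq 𝒞 f)

/-- `|∇f|² = ∑_i |∂_i f|²` (Frobenius norm squared of the spatial gradient). -/
def gradSq (f : E3 → F) (x : E3) : ℝ := ∑ i : Fin 3, ‖fderiv ℝ f x (ev3 i)‖ ^ 2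

/-- `α_t[u] = esssup_{0<s<t} ‖u(s)‖_M²`. -/
def alphaT (𝒞 : Set BallData) (u : ℝ → E3 → F) (t : ℝ) : ℝ :=
  essSup (fun s => MnSq 𝒞 (u s)) (volume.restrict (Ioo 0 t))

/-- `β_t[u] = sup_{B ∈ 𝒞} |B|^{-2/3} ∫₀ᵗ ∫_B |∇u|²`. -/
def betaT (𝒞 : Set BallData) (u : ℝ → E3 → F) (t : ℝ) : ℝ :=
  sSup {a : ℝ | ∃ B ∈ 𝒞,
    a = ballVol B ^ (-(2:ℝ)/3) * ∫ s in Ioc (0:ℝ) t, ∫ x in ballSet B, gradSq (u s) x}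

/-- Divergence of a vector field. -/
def divg (f : E3 → E3) (x : E3) : ℝ := ∑ i : Fin 3, fderiv ℝ f x (ev3 i) i

/-- Laplacian of a scalar function. -/
def lapl (φ : E3 → ℝ) (x : E3) : ℝ :=
  ∑ i : Fin 3, fderiv ℝ (fun y => fderiv ℝ φ y (ev3 i)) x (ev3 i)

/-- The kernel `K_{ij}(z) = ∂_i∂_j (4π|z|)⁻¹ = (3 z_i z_j − δ_{ij}|z|²)/(4π|z|⁵)`. -/
def Kker (i j : Fin 3) (z : E3) : ℝ :=
  (3 * z i * z j - (if i = j then (1:ℝ) else 0) * ‖z‖ ^ 2) / (4 * Real.pi * ‖z‖ ^ 5)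

/-- The kernel `L_j(z) = z_j/(4π|z|³)`. -/
def Lker (j : Fin 3) (z : E3) : ℝ := z j / (4 * Real.pi * ‖z‖ ^ 3)

/-- Weak (distributional) divergence-freeness of a vector field on `ℝ³`. -/
def WeaklyDivFree (f : E3 → E3) : Prop :=
  ∀ φ : E3 → ℝ, ContDiff ℝ (⊤ : ℕ∞) φ → HasCompactSupport φ →
    (∫ x, ∑ i : Fin 3, f x i * fderiv ℝ φ x (ev3 i)) = 0

/-!
Call two balls linked when a chain of at most two further balls of the cover joins them. If `Q₁`
and `Q₂` are not linked, follow the segment between their centers to a point where a ball meeting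
`Q₁` touches a ball `C` not meeting `Q₁`. Then `C` misses both `Q₁` and `Q₂`, and passing through
one intermediate ball gives `r₁ ≤ η² r_C`. Exchanging the roles of `Q₁` and `Q₂` and keeping the
larger of the two balls obtained gives `r₂ ≤ η² r_C` as well. Now `C` meets the segment while its
center is at distance at least `r_C + rᵢ` from `xᵢ`, so by Pythagoras the foot of the perpendicular
from its center to the line splits the segment into parts of squared length at least
`(r_C + rᵢ)² - r_C² = rᵢ² + 2 rᵢ r_C ≥ (1 + 2 / η²) rᵢ²`; as all radii are at least `1`, this is
also at least `(rᵢ + 1 / 2)²`.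
-/

section Geometry

variable {E : Type*} [NormedAddCommGroup E] [InnerProductSpace ℝ E]

-- The right-hand side is the signed distance, along `v`, from `-b • v` to the foot of the
-- perpendicular from `w` to the line spanned by `v`.
lemma le_mul_norm_add_inner_div_norm {v w : E} {b ρ L : ℝ} (hb : 0 ≤ b) (hL : 0 < L)
    (hw : ‖w‖ ≤ ρ) (h : ρ ^ 2 + L ^ 2 ≤ ‖w + b • v‖ ^ 2) :
    L ≤ b * ‖v‖ + inner ℝ w v / ‖v‖ := by
  have hwρ : ‖w‖ ^ 2 ≤ ρ ^ 2 := by gcongr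
  have hLle : L ^ 2 ≤ b * (b * ‖v‖ ^ 2 + 2 * inner ℝ w v) := by
    rw [norm_add_sq_real, inner_smul_right, norm_smul, Real.norm_of_nonneg hb] at h
    linarith
  have hpos : 0 < b * ‖v‖ ^ 2 + 2 * inner ℝ w v :=
    pos_of_mul_pos_right ((sq_pos_of_pos hL).trans_le hLle) hb
  have hv : 0 < ‖v‖ := norm_pos_iff.mpr fun hv => by simp [hv] at hpos
  have hfoot : 0 ≤ b * ‖v‖ + inner ℝ w v / ‖v‖ := by
    have : 0 ≤ b * ‖v‖ ^ 2 + inner ℝ w v := by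
      linarith [mul_nonneg hb (sq_nonneg ‖v‖)]
    calc 0 ≤ (b * ‖v‖ ^ 2 + inner ℝ w v) / ‖v‖ := by positivity
      _ = b * ‖v‖ + inner ℝ w v / ‖v‖ := by field_simp
  refine (sq_le_sq₀ hL.le hfoot).mp ?_
  calc L ^ 2 ≤ b * (b * ‖v‖ ^ 2 + 2 * inner ℝ w v) := hLle
    _ ≤ b * (b * ‖v‖ ^ 2 + 2 * inner ℝ w v) + (inner ℝ w v / ‖v‖) ^ 2 :=
      le_add_of_nonneg_right (sq_nonneg _)
    _ = (b * ‖v‖ + inner ℝ w v / ‖v‖) ^ 2 := by field_simp; ring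

lemma add_le_dist_of_mem_segment {x y z p : E} {ρ L₁ L₂ : ℝ} (hL₁ : 0 < L₁) (hL₂ : 0 < L₂)
    (hp : p ∈ segment ℝ x y) (hpz : p ∈ closedBall z ρ) (hx : ρ ^ 2 + L₁ ^ 2 ≤ dist z x ^ 2)
    (hy : ρ ^ 2 + L₂ ^ 2 ≤ dist z y ^ 2) : L₁ + L₂ ≤ dist x y := by
  obtain ⟨a, b, ha, hb, hab, rfl⟩ := hp
  obtain rfl : a = 1 - b := by linarith
  have hw : ‖z - ((1 - b) • x + b • y)‖ ≤ ρ := by rwa [← dist_eq_norm, dist_comm]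
  have hzx : z - x = z - ((1 - b) • x + b • y) + b • (y - x) := by module
  have hzy : z - y = z - ((1 - b) • x + b • y) + (1 - b) • (x - y) := by module
  rw [dist_eq_norm, hzx] at hx
  rw [dist_eq_norm, hzy] at hy
  have h₁ := le_mul_norm_add_inner_div_norm hb hL₁ hw hx
  have h₂ := le_mul_norm_add_inner_div_norm ha hL₂ hw hy
  rw [← neg_sub x y, norm_neg, inner_neg_right] at h₁
  rw [dist_eq_norm]
  linarith [neg_div ‖x - y‖ (inner ℝ (z - ((1 - b) • x + b • y)) (x - y))]

end Geometry

lemma sq_sqrt_one_add_mul_le {η r ρ : ℝ} (hη : η ≠ 0) (hr : 0 ≤ r) (h : r ≤ η ^ 2 * ρ) :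
    (√(1 + 2 / η ^ 2) * r) ^ 2 ≤ r ^ 2 + 2 * r * ρ := by
  have hρ : r / η ^ 2 ≤ ρ := by rwa [div_le_iff₀' (by positivity)]
  calc (√(1 + 2 / η ^ 2) * r) ^ 2 = r ^ 2 + 2 * r * (r / η ^ 2) := by
        rw [mul_pow, Real.sq_sqrt (by positivity)]; ring
    _ ≤ r ^ 2 + 2 * r * ρ := by gcongr

lemma exists_mem_inter_of_isPreconnected {X ι : Type*} [TopologicalSpace X] {s : Set X}
    (hs : IsPreconnected s) {f : ι → Set X} (hf : LocallyFinite f) (hclosed : ∀ i, IsClosed (f i))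
    (hcover : s ⊆ ⋃ i, f i) {P : ι → Prop} {i j : ι} (hi : P i) (hj : ¬ P j)
    (hsi : (s ∩ f i).Nonempty) (hsj : (s ∩ f j).Nonempty) :
    ∃ k l, P k ∧ ¬ P l ∧ (s ∩ (f k ∩ f l)).Nonempty := by
  have isClosed_part (p : ι → Prop) : IsClosed (⋃ k : {k // p k}, f k) :=
    (hf.comp_injective Subtype.val_injective).isClosed_iUnion fun k => hclosed k
  have hcover' : s ⊆ (⋃ k : {k // P k}, f k) ∪ ⋃ k : {k // ¬ P k}, f k := by
    intro x hx
    obtain ⟨k, hk⟩ := mem_iUnion.mp (hcover hx)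
    by_cases hPk : P k
    · exact Or.inl (mem_iUnion.mpr ⟨⟨k, hPk⟩, hk⟩)
    · exact Or.inr (mem_iUnion.mpr ⟨⟨k, hPk⟩, hk⟩)
  obtain ⟨x, hx, hxP, hxn⟩ := isPreconnected_closed_iff.mp hs _ _ (isClosed_part P)
    (isClosed_part (¬ P ·)) hcover'
    (hsi.mono (inter_subset_inter_right s (subset_iUnion_of_subset ⟨i, hi⟩ subset_rfl)))
    (hsj.mono (inter_subset_inter_right s (subset_iUnion_of_subset ⟨j, hj⟩ subset_rfl)))
  obtain ⟨⟨k, hk⟩, hxk⟩ := mem_iUnion.mp hxP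
  obtain ⟨⟨l, hl⟩, hxl⟩ := mem_iUnion.mp hxn
  exact ⟨k, l, hk, hl, x, hx, hxk, hxl⟩

-- A ball of radius at least `δ` that comes within `δ` of `x` contains a point of any
-- `δ`-net of `closedBall x (2 * δ)`.
lemma locallyFinite_closedBall_of_le_radius {E ι : Type*} [SeminormedAddCommGroup E]
    [NormedSpace ℝ E] [ProperSpace E] {c : ι → E} {r : ι → ℝ} {δ : ℝ} (hδ : 0 < δ)
    (hr : ∀ i, δ ≤ r i) (hfin : ∀ x, {i | x ∈ closedBall (c i) (r i)}.Finite) :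
    LocallyFinite fun i => closedBall (c i) (r i) := by
  intro x
  obtain ⟨t, -, ht, hcover⟩ := (isCompact_closedBall x (2 * δ)).finite_cover_balls hδ
  refine ⟨ball x δ, ball_mem_nhds x hδ, (ht.biUnion fun q _ => hfin q).subset ?_⟩
  rintro i ⟨z, hzi, hzx⟩
  obtain ⟨p, hzp, hpi⟩ : ∃ p, dist z p ≤ δ ∧ dist p (c i) ≤ r i - δ :=
    exists_dist_le_le hδ.le (sub_nonneg.mpr (hr i)) (by simpa using hzi)
  have hpx : p ∈ closedBall x (2 * δ) := by
    rw [mem_closedBall]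
    linarith [dist_triangle_left p x z, mem_ball.mp hzx]
  obtain ⟨q, hqt, hpq⟩ := mem_iUnion₂.mp (hcover hpx)
  refine mem_iUnion₂.mpr ⟨q, hqt, ?_⟩
  change dist q (c i) ≤ r i
  linarith [dist_triangle_left q (c i) p, mem_ball.mp hpq]

section BallFamily

variable {E ι : Type*}

/-- The `i`-th and `j`-th balls of the family of closed balls with centers `c` and radii `r`
intersect. -/
def Meets [PseudoMetricSpace E] (c : ι → E) (r : ι → ℝ) (i j : ι) : Prop :=
  (closedBall (c i) (r i) ∩ closedBall (c j) (r j)).Nonempty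

/-- The `i`-th and `j`-th balls are at distance at most `3` in the intersection graph of the family:
chains of fewer than two intermediate balls are included because a (nonempty) ball meets itself. -/
def Linked [PseudoMetricSpace E] (c : ι → E) (r : ι → ℝ) (i j : ι) : Prop :=
  ∃ k l, Meets c r i k ∧ Meets c r k l ∧ Meets c r l j

/-- A locally finite cover of `E` by closed balls of radius at least `1`, the radii of intersecting
balls differing by a factor of at most `η`. It abstracts the properties of the covers `𝒞^{σ,η}` that
separate distant layers. -/
structure IsComparableBallCover [PseudoMetricSpace E] (η : ℝ) (c : ι → E) (r : ι → ℝ) : Prop where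
  one_le_radius : ∀ i, 1 ≤ r i
  exists_mem : ∀ x, ∃ i, x ∈ closedBall (c i) (r i)
  locallyFinite : LocallyFinite fun i => closedBall (c i) (r i)
  radius_le_mul : ∀ {i j}, Meets c r i j → r i ≤ η * r j

section PseudoMetricSpace

variable [PseudoMetricSpace E] {c : ι → E} {r : ι → ℝ} {η : ℝ} {i j : ι}

lemma Meets.symm (h : Meets c r i j) : Meets c r j i := by
  rwa [Meets, inter_comm]

lemma Linked.symm : Linked c r i j → Linked c r j i := by
  rintro ⟨k, l, hik, hkl, hlj⟩
  exact ⟨l, k, hlj.symm, hkl.symm, hik.symm⟩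

namespace IsComparableBallCover

lemma radius_pos (h : IsComparableBallCover η c r) (i : ι) : 0 < r i :=
  one_pos.trans_le (h.one_le_radius i)

lemma center_mem (h : IsComparableBallCover η c r) (i : ι) : c i ∈ closedBall (c i) (r i) :=
  mem_closedBall_self (h.radius_pos i).le

lemma meets_self (h : IsComparableBallCover η c r) (i : ι) : Meets c r i i :=
  ⟨c i, h.center_mem i, h.center_mem i⟩

lemma factor_pos (h : IsComparableBallCover η c r) (i : ι) : 0 < η :=
  pos_of_mul_pos_left ((h.radius_pos i).trans_le (h.radius_le_mul (h.meets_self i)))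
    (h.radius_pos i).le

end IsComparableBallCover

end PseudoMetricSpace

namespace IsComparableBallCover

section NormedSpace

variable [SeminormedAddCommGroup E] [NormedSpace ℝ E] {c : ι → E} {r : ι → ℝ} {η : ℝ} {i j : ι}

lemma radius_add_radius_le_dist (h : IsComparableBallCover η c r) (hij : ¬ Meets c r i j) :
    r i + r j ≤ dist (c i) (c j) :=
  ((disjoint_closedBall_closedBall_iff (h.radius_pos i).le (h.radius_pos j).le).mp
    (disjoint_iff_inter_eq_empty.mpr (not_nonempty_iff_eq_empty.mp hij))).le

lemma exists_not_meets_of_not_linked (h : IsComparableBallCover η c r)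
    (hij : ¬ Linked c r i j) :
    ∃ k, ¬ Meets c r i k ∧ ¬ Meets c r k j ∧ r i ≤ η ^ 2 * r k ∧
      (segment ℝ (c i) (c j) ∩ closedBall (c k) (r k)).Nonempty := by
  have hnij : ¬ Meets c r i j := fun hm => hij ⟨j, j, hm, h.meets_self j, h.meets_self j⟩
  obtain ⟨k, l, hik, hil, p, hp, hpk, hpl⟩ :=
    exists_mem_inter_of_isPreconnected (convex_segment (c i) (c j)).isPreconnected
      h.locallyFinite (fun _ => isClosed_closedBall) (fun x _ => mem_iUnion.mpr (h.exists_mem x))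
      (P := Meets c r i) (h.meets_self i) hnij
      ⟨c i, left_mem_segment ℝ _ _, h.center_mem i⟩ ⟨c j, right_mem_segment ℝ _ _, h.center_mem j⟩
  have hkl : Meets c r k l := ⟨p, hpk, hpl⟩
  refine ⟨l, hil, fun hlj => hij ⟨k, l, hik, hkl, hlj⟩, ?_, p, hp, hpl⟩
  have hη := h.factor_pos i
  calc r i ≤ η * r k := h.radius_le_mul hik
    _ ≤ η * (η * r l) := by gcongr; exact h.radius_le_mul hkl
    _ = η ^ 2 * r l := by ring

lemma exists_large_not_meets_of_not_linked (h : IsComparableBallCover η c r)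
    (hij : ¬ Linked c r i j) :
    ∃ k, ¬ Meets c r i k ∧ ¬ Meets c r k j ∧ r i ≤ η ^ 2 * r k ∧ r j ≤ η ^ 2 * r k ∧
      (segment ℝ (c i) (c j) ∩ closedBall (c k) (r k)).Nonempty := by
  obtain ⟨k, hik, hkj, hrk, hk⟩ := h.exists_not_meets_of_not_linked hij
  obtain ⟨l, hjl, hli, hrl, hl⟩ := h.exists_not_meets_of_not_linked (hij ∘ Linked.symm)
  rw [segment_symm] at hl
  rcases le_total (r k) (r l) with hkl | hlk
  · exact ⟨l, hli ∘ Meets.symm, hjl ∘ Meets.symm, hrk.trans (by gcongr), hrl, hl⟩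
  · exact ⟨k, hik, hkj, hrk, hrl.trans (by gcongr), hk⟩

end NormedSpace

section InnerProductSpace

variable [NormedAddCommGroup E] [InnerProductSpace ℝ E] {c : ι → E} {r : ι → ℝ} {η : ℝ}
  {i j k : ι}

lemma add_le_dist_of_segment_inter_nonempty (h : IsComparableBallCover η c r)
    (hik : ¬ Meets c r i k) (hkj : ¬ Meets c r k j)
    (hk : (segment ℝ (c i) (c j) ∩ closedBall (c k) (r k)).Nonempty) {L₁ L₂ : ℝ}
    (hL₁ : 0 < L₁) (hL₂ : 0 < L₂) (hi : L₁ ^ 2 ≤ r i ^ 2 + 2 * r i * r k)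
    (hj : L₂ ^ 2 ≤ r j ^ 2 + 2 * r j * r k) : L₁ + L₂ ≤ dist (c i) (c j) := by
  obtain ⟨p, hp, hpk⟩ := hk
  have tangent_sq_le {m : ι} {L : ℝ} (hmk : ¬ Meets c r k m)
      (hL : L ^ 2 ≤ r m ^ 2 + 2 * r m * r k) : r k ^ 2 + L ^ 2 ≤ dist (c k) (c m) ^ 2 := by
    have hrk := h.radius_pos k
    have hrm := h.radius_pos m
    calc r k ^ 2 + L ^ 2 ≤ (r k + r m) ^ 2 := by linarith
      _ ≤ dist (c k) (c m) ^ 2 := by gcongr; exact h.radius_add_radius_le_dist hmk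
  exact add_le_dist_of_mem_segment hL₁ hL₂ hp hpk (tangent_sq_le (hik ∘ Meets.symm) hi)
    (tangent_sq_le hkj hj)

lemma sqrt_mul_le_dist_of_not_linked (h : IsComparableBallCover η c r)
    (hij : ¬ Linked c r i j) :
    √(1 + 2 / η ^ 2) * (r i + r j) ≤ dist (c i) (c j) := by
  obtain ⟨k, hik, hkj, hri, hrj, hk⟩ := h.exists_large_not_meets_of_not_linked hij
  have hη := h.factor_pos i
  have hi := h.radius_pos i
  have hj := h.radius_pos j
  rw [mul_add]
  exact h.add_le_dist_of_segment_inter_nonempty hik hkj hk (by positivity) (by positivity)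
    (sq_sqrt_one_add_mul_le hη.ne' hi.le hri) (sq_sqrt_one_add_mul_le hη.ne' hj.le hrj)

lemma radius_add_radius_add_one_le_dist_of_not_linked (h : IsComparableBallCover η c r)
    (hij : ¬ Linked c r i j) : r i + r j + 1 ≤ dist (c i) (c j) := by
  obtain ⟨k, hik, hkj, -, hk⟩ := h.exists_not_meets_of_not_linked hij
  have add_half_sq_le (m : ι) : (r m + 1 / 2) ^ 2 ≤ r m ^ 2 + 2 * r m * r k := by
    nlinarith [h.one_le_radius m, h.one_le_radius k]
  have hi := h.radius_pos i
  have hj := h.radius_pos j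
  have := h.add_le_dist_of_segment_inter_nonempty hik hkj hk (by positivity) (by positivity)
    (add_half_sq_le i) (add_half_sq_le j)
  linarith

end InnerProductSpace

end IsComparableBallCover

theorem separation_of_layers_general [NormedAddCommGroup E] [InnerProductSpace ℝ E] {c : ι → E}
    {r : ι → ℝ} {η : ℝ} {i j : ι} (h : IsComparableBallCover η c r) (hij : ¬ Linked c r i j)
    {x y : E} (hx : x ∈ closedBall (c i) (r i)) (hy : y ∈ closedBall (c j) (r j)) :
    max ((√(1 + 2 / η ^ 2) - 1) * (r i + r j)) 1 ≤ dist x y := by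
  have hcenters : dist (c i) (c j) ≤ r i + dist x y + r j :=
    (dist_triangle4 _ x y _).trans (by gcongr <;> [exact mem_closedBall'.mp hx; exact hy])
  refine max_le ?_ ?_
  · linarith [h.sqrt_mul_le_dist_of_not_linked hij]
  · linarith [h.radius_add_radius_add_one_le_dist_of_not_linked hij]

end BallFamily

lemma ballVol_rpow_div_ballVol_rpow {B B' : BallData} (hB : 0 ≤ B.2) (hB' : 0 ≤ B'.2) :
    ballVol B ^ ((1 : ℝ) / 3) / ballVol B' ^ ((1 : ℝ) / 3) = B.2 / B'.2 := by
  have hvol : ballVol B / ballVol B' = (B.2 / B'.2) ^ 3 := by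
    rw [ballVol, ballVol, mul_div_mul_left _ _ (by positivity), div_pow]
  rw [← Real.div_rpow (by unfold ballVol; positivity) (by unfold ballVol; positivity), hvol]
  simpa using Real.pow_rpow_inv_natCast (div_nonneg hB hB') three_ne_zero

lemma le_setDistance {A B : Set E3} {d : ℝ} (hA : A.Nonempty) (hB : B.Nonempty)
    (h : ∀ a ∈ A, ∀ b ∈ B, d ≤ dist a b) : d ≤ setDistance A B := by
  obtain ⟨a, ha⟩ := hA
  obtain ⟨b, hb⟩ := hB
  refine le_csInf ⟨_, a, ha, b, hb, rfl⟩ ?_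
  rintro _ ⟨a, ha, b, hb, rfl⟩
  exact h a ha b hb

namespace IsCover

variable {σ η : ℝ} {𝒞 : Set BallData}

lemma ballSet_nonempty (h : IsCover σ η 𝒞) {B : BallData} (hB : B ∈ 𝒞) : (ballSet B).Nonempty :=
  nonempty_closedBall.mpr (zero_le_one.trans (h.radius_ge_one B hB))

lemma finite_setOf_mem (h : IsCover σ η 𝒞) (x : E3) :
    {B : 𝒞 | x ∈ closedBall B.1.1 B.1.2}.Finite := by
  obtain ⟨B₀, hB₀, hx⟩ := h.covers x
  refine Finite.of_finite_image (f := Subtype.val) ?_ Subtype.val_injective.injOn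
  refine ((h.overlap_finite B₀ hB₀).insert B₀).subset ?_
  rintro _ ⟨⟨B, hB⟩, hxB, rfl⟩
  exact or_iff_not_imp_left.mpr fun hne => ⟨hB, hne, x, hx, hxB⟩

lemma isComparableBallCover (h : IsCover σ η 𝒞) :
    IsComparableBallCover η (fun B : 𝒞 => B.1.1) (fun B : 𝒞 => B.1.2) where
  one_le_radius B := h.radius_ge_one B B.2
  exists_mem x := by
    obtain ⟨B, hB, hx⟩ := h.covers x
    exact ⟨⟨B, hB⟩, hx⟩
  locallyFinite := locallyFinite_closedBall_of_le_radius one_pos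
    (fun B : 𝒞 => h.radius_ge_one B B.2) h.finite_setOf_mem
  radius_le_mul := by
    intro B B' hBB'
    have hB := zero_lt_one.trans_le (h.radius_ge_one B B.2)
    have hB' := zero_lt_one.trans_le (h.radius_ge_one B' B'.2)
    have hratio := h.comparable_ub B B.2 B' B'.2 hBB'
    rwa [ballVol_rpow_div_ballVol_rpow hB.le hB'.le, div_le_iff₀ hB'] at hratio

end IsCover

section Layers

variable {𝒞 : Set BallData} {Q B : BallData} {n : ℕ}

lemma ballSet_subset_layerU_succ (hB : B ∈ 𝒞) (h : (ballSet B ∩ layerU 𝒞 Q n).Nonempty) :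
    ballSet B ⊆ layerU 𝒞 Q (n + 1) :=
  subset_biUnion_of_mem (u := ballSet) (⟨hB, h⟩ : B ∈ {B | B ∈ 𝒞 ∧ _})

lemma mem_of_mem_PColl (hQ : Q ∈ 𝒞) (hB : B ∈ PColl 𝒞 Q n) : B ∈ 𝒞 := by
  cases n with
  | zero => exact (mem_singleton_iff.mp hB) ▸ hQ
  | succ n => exact hB.1

lemma ballSet_subset_layerU_of_mem_PColl (hB : B ∈ PColl 𝒞 Q n) : ballSet B ⊆ layerU 𝒞 Q n := by
  cases n with
  | zero => exact (mem_singleton_iff.mp hB) ▸ subset_rfl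
  | succ n => exact ballSet_subset_layerU_succ hB.1 hB.2

lemma ballSet_subset_layerU_add_three_of_linked {A D : 𝒞} (hA : ballSet A ⊆ layerU 𝒞 Q n)
    (hAD : Linked (fun B : 𝒞 => B.1.1) (fun B : 𝒞 => B.1.2) A D) :
    ballSet D ⊆ layerU 𝒞 Q (n + 3) := by
  have subset_succ {m : ℕ} {B C : 𝒞} (hB : ballSet B ⊆ layerU 𝒞 Q m)
      (hBC : Meets (fun B : 𝒞 => B.1.1) (fun B : 𝒞 => B.1.2) B C) :
      ballSet C ⊆ layerU 𝒞 Q (m + 1) :=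
    ballSet_subset_layerU_succ C.2 (hBC.symm.mono (inter_subset_inter_right _ hB))
  obtain ⟨B, C, hAB, hBC, hCD⟩ := hAD
  exact subset_succ (subset_succ (subset_succ hA hAB) hBC) hCD

end Layers

/-- **Separation of layers** (Lemma 3.1). If `Q₁ = B(x₁,r₁) ∈ P⁽ⁿ⁾` and `Q₂ = B(x₂,r₂)`
is a ball of `𝒞` belonging to the `(n+4)`-th layer (i.e. `Q₂ ⊆ Q⁽ⁿ⁺⁴⁾`, `Q₂ ⊄ Q⁽ⁿ⁺³⁾`),
then `dist(Q₁,Q₂) ≥ max{κ(r₁+r₂), 1}` where `κ = √(1+2/η²) − 1`. -/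
theorem separation_of_layers (σ η : ℝ) (hσ : 0 < σ) (hη : 0 < η)
    (𝒞 : Set BallData) (hcov : IsCover σ η 𝒞)
    (Q : BallData) (hQ : Q ∈ 𝒞) (n : ℕ)
    (Q₁ : BallData) (hQ₁ : Q₁ ∈ PColl 𝒞 Q n)
    (Q₂ : BallData) (hQ₂ : Q₂ ∈ 𝒞)
    (hsub : ballSet Q₂ ⊆ layerU 𝒞 Q (n + 4))
    (hnsub : ¬ ballSet Q₂ ⊆ layerU 𝒞 Q (n + 3)) :
    max ((Real.sqrt (1 + 2 / η ^ 2) - 1) * (Q₁.2 + Q₂.2)) 1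
      ≤ setDistance (ballSet Q₁) (ballSet Q₂) := by
  have hQ₁' : Q₁ ∈ 𝒞 := mem_of_mem_PColl hQ hQ₁
  have hnot : ¬ Linked (fun B : 𝒞 => B.1.1) (fun B : 𝒞 => B.1.2) ⟨Q₁, hQ₁'⟩ ⟨Q₂, hQ₂⟩ :=
    mt (ballSet_subset_layerU_add_three_of_linked (ballSet_subset_layerU_of_mem_PColl hQ₁)) hnsub
  exact le_setDistance (hcov.ballSet_nonempty hQ₁') (hcov.ballSet_nonempty hQ₂)
    fun x hx y hy => separation_of_layers_general hcov.isComparableBallCover hnot hx hy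

end
end

section
/- Let Q ∈ 𝒞 and x ∈ Q. Then every point y ∈ ℝ³ satisfies y ∈ Q^{(4⌈|x−y|⌉)}, where ⌈·⌉ denotes the ceiling function. -/
open MeasureTheory Real Set Metric Filter
open scoped BigOperators ENNReal

noncomputable section

variable {F : Type} [NormedAddCommGroup F] [NormedSpace ℝ F]

/-!
If two balls of the cover have points at distance at most `1`, their centers are at most `1` more
than the sum of their radii apart. By Stewart's theorem, a ball of radius at least `1` which reaches
a point of the segment joining the two centers must meet one of the two balls. So the segment is
covered by the first layers of the two balls; these are closed, as unions of finitely many balls,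
hence by connectedness they have a common point, and each of the two balls lies in the third layer
of the other. Cutting the segment from `x` to `y` into pieces of length at most `1` gives the
theorem, even with `3⌈|x - y|⌉` layers.
-/

section Layers

variable {ι X : Type*} {s : ι → Set X} {i j : ι}

/-- The union of the layers `0, …, n` around `s i` of a family `s` of sets, i.e. the set `Q^{(n)}`
for `Q = s i`. The family is indexed, whereas `layerU` works with a set of balls of `ℝ³`. -/
def layerUnion (s : ι → Set X) (i : ι) : ℕ → Set X
  | 0 => s i
  | n + 1 => ⋃ j ∈ {j | (s j ∩ layerUnion s i n).Nonempty}, s j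

lemma subset_layerUnion_succ {n : ℕ} (h : (s j ∩ layerUnion s i n).Nonempty) :
    s j ⊆ layerUnion s i (n + 1) :=
  subset_biUnion_of_mem (u := s) (show j ∈ {j | (s j ∩ layerUnion s i n).Nonempty} from h)

lemma mem_layerUnion_succ {n : ℕ} {x : X} :
    x ∈ layerUnion s i (n + 1) ↔ ∃ j, (s j ∩ layerUnion s i n).Nonempty ∧ x ∈ s j := by
  simp only [layerUnion, mem_iUnion, mem_ofPred_eq, exists_prop]

lemma monotone_layerUnion : Monotone (layerUnion s i) := by
  refine monotone_nat_of_le_succ fun n x hx => ?_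
  cases n with
  | zero => exact subset_layerUnion_succ (j := i) ⟨x, hx, hx⟩ hx
  | succ n =>
    obtain ⟨j, -, hxj⟩ := mem_layerUnion_succ.1 hx
    exact subset_layerUnion_succ ⟨x, hxj, hx⟩ hxj

lemma layerUnion_subset_layerUnion_add {m : ℕ} (h : s j ⊆ layerUnion s i m) (n : ℕ) :
    layerUnion s j n ⊆ layerUnion s i (m + n) := by
  induction n with
  | zero => exact h
  | succ n ih =>
    exact biUnion_subset_biUnion_left fun k hk => hk.mono (inter_subset_inter_right _ ih)

variable [TopologicalSpace X]

lemma isClosed_layerUnion_one (hs : ∀ k, IsClosed (s k))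
    (hfin : {k | (s k ∩ s i).Nonempty}.Finite) : IsClosed (layerUnion s i 1) :=
  hfin.isClosed_biUnion fun k _ => hs k

lemma subset_layerUnion_three_of_isPreconnected (hs : ∀ k, IsClosed (s k))
    (hfin_i : {k | (s k ∩ s i).Nonempty}.Finite) (hfin_j : {k | (s k ∩ s j).Nonempty}.Finite)
    {t : Set X} (ht : IsPreconnected t) (hi : (t ∩ s i).Nonempty)
    (hj : (t ∩ s j).Nonempty) (hcover : t ⊆ layerUnion s i 1 ∪ layerUnion s j 1) :
    s j ⊆ layerUnion s i 3 := by
  have subset_one (k : ι) : s k ⊆ layerUnion s k 1 := monotone_layerUnion zero_le_one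
  obtain ⟨p, -, hpi, hpj⟩ := isPreconnected_closed_iff.1 ht _ _
    (isClosed_layerUnion_one hs hfin_i) (isClosed_layerUnion_one hs hfin_j) hcover
    (hi.mono (inter_subset_inter_right t (subset_one i)))
    (hj.mono (inter_subset_inter_right t (subset_one j)))
  obtain ⟨k, ⟨q, hqk, hqj⟩, hpk⟩ := mem_layerUnion_succ.1 hpj
  have hk : s k ⊆ layerUnion s i 2 := subset_layerUnion_succ ⟨p, hpk, hpi⟩
  exact subset_layerUnion_succ ⟨q, hqj, hk hqk⟩

end Layers

section Balls

lemma add_mul_sq_add_mul_le {r r₁ r₂ α β : ℝ} (hα : 0 ≤ α) (hβ : 0 ≤ β) (hr₁ : 0 ≤ r₁)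
    (hr₂ : 0 ≤ r₂) (hr : α + β ≤ r) (hαβ : α * β ≤ 2 * (r₁ * r₂)) :
    ((r₁ + α) + (r₂ + β)) * (r ^ 2 + (r₁ + α) * (r₂ + β)) ≤
      (r + r₁) ^ 2 * (r₂ + β) + (r + r₂) ^ 2 * (r₁ + α) := by
  have gap_nonneg : 0 ≤ (r - (α + β)) * (r₁ * (r₂ + β) + r₂ * (r₁ + α)) :=
    mul_nonneg (sub_nonneg.2 hr) (by positivity)
  have mul_gap_nonneg : 0 ≤ (α + β) * (2 * (r₁ * r₂) - α * β) :=
    mul_nonneg (by positivity) (sub_nonneg.2 hαβ)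
  have sq_terms_nonneg : 0 ≤ r₁ * β ^ 2 + r₂ * α ^ 2 := by positivity
  linear_combination 2 * gap_nonneg + mul_gap_nonneg + sq_terms_nonneg

variable {E : Type*} [NormedAddCommGroup E]

lemma closedBall_inter_closedBall_nonempty_iff [NormedSpace ℝ E] {a b : E} {r₁ r₂ : ℝ}
    (hr₁ : 0 ≤ r₁) (hr₂ : 0 ≤ r₂) :
    (closedBall a r₁ ∩ closedBall b r₂).Nonempty ↔ dist a b ≤ r₁ + r₂ := by
  rw [← not_disjoint_iff_nonempty_inter, disjoint_closedBall_closedBall_iff hr₁ hr₂, not_lt]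

variable [InnerProductSpace ℝ E]

lemma dist_le_add_or_of_sbtw {a b c p : E} {r r₁ r₂ δ : ℝ} (hδ : 0 ≤ δ) (hr : δ ≤ r)
    (hr₁ : δ ≤ r₁) (hr₂ : δ ≤ r₂) (hab : dist a b ≤ r₁ + r₂ + δ) (hp : Sbtw ℝ a p b)
    (hap : r₁ ≤ dist a p) (hbp : r₂ ≤ dist b p) (hcp : dist c p ≤ r) :
    dist c a ≤ r + r₁ ∨ dist c b ≤ r + r₂ := by
  by_contra! ⟨hca, hcb⟩
  have hr₁' : 0 ≤ r₁ := hδ.trans hr₁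
  have hr₂' : 0 ≤ r₂ := hδ.trans hr₂
  have hra : 0 ≤ r + r₁ := add_nonneg (hδ.trans hr) hr₁'
  have hrb : 0 ≤ r + r₂ := add_nonneg (hδ.trans hr) hr₂'
  have hap_pos : 0 < dist a p := dist_pos.2 hp.left_ne
  have hbp_pos : 0 < dist b p := dist_pos.2 hp.right_ne
  have hsum : dist a b = dist a p + dist b p := by
    rw [dist_comm b p, hp.wbtw.dist_add_dist]
  obtain ⟨α, hα⟩ : ∃ α, dist a p = r₁ + α := ⟨dist a p - r₁, by ring⟩
  obtain ⟨β, hβ⟩ : ∃ β, dist b p = r₂ + β := ⟨dist b p - r₂, by ring⟩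
  have hα₀ : 0 ≤ α := by linarith
  have hβ₀ : 0 ≤ β := by linarith
  have hαβ : α + β ≤ δ := by linarith
  have hmul : α * β ≤ 2 * (r₁ * r₂) :=
    calc
      α * β ≤ r₁ * r₂ := by gcongr <;> linarith
      _ ≤ 2 * (r₁ * r₂) := le_mul_of_one_le_left (by positivity) one_le_two
  refine lt_irrefl ((r + r₁) ^ 2 * dist b p + (r + r₂) ^ 2 * dist a p) ?_
  calc
    _ < dist c a ^ 2 * dist b p + dist c b ^ 2 * dist a p := by gcongr
    _ = (dist a p + dist b p) * (dist c p ^ 2 + dist a p * dist b p) := by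
      rw [← hsum, EuclideanGeometry.dist_sq_mul_dist_add_dist_sq_mul_dist c a b p
        hp.angle₁₂₃_eq_pi]
    _ ≤ (dist a p + dist b p) * (r ^ 2 + dist a p * dist b p) := by gcongr
    _ ≤ _ := by
      rw [hα, hβ]
      exact add_mul_sq_add_mul_le hα₀ hβ₀ hr₁' hr₂' (hαβ.trans hr) hmul

lemma closedBall_inter_nonempty_or_of_mem_segment {a b c p : E} {r r₁ r₂ δ : ℝ} (hδ : 0 ≤ δ)
    (hr : δ ≤ r) (hr₁ : δ ≤ r₁) (hr₂ : δ ≤ r₂) (hab : dist a b ≤ r₁ + r₂ + δ)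
    (hp : p ∈ segment ℝ a b) (hpc : p ∈ closedBall c r) :
    (closedBall c r ∩ closedBall a r₁).Nonempty ∨ (closedBall c r ∩ closedBall b r₂).Nonempty := by
  have hr₁' : 0 ≤ r₁ := hδ.trans hr₁
  have hr₂' : 0 ≤ r₂ := hδ.trans hr₂
  by_cases hpa : p ∈ closedBall a r₁
  · exact Or.inl ⟨p, hpc, hpa⟩
  by_cases hpb : p ∈ closedBall b r₂
  · exact Or.inr ⟨p, hpc, hpb⟩
  have hapb : Sbtw ℝ a p b := ⟨mem_segment_iff_wbtw.1 hp,
    fun h => hpa (h ▸ mem_closedBall_self hr₁'), fun h => hpb (h ▸ mem_closedBall_self hr₂')⟩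
  rw [closedBall_inter_closedBall_nonempty_iff (hδ.trans hr) hr₁',
    closedBall_inter_closedBall_nonempty_iff (hδ.trans hr) hr₂']
  rw [mem_closedBall', not_le] at hpa hpb
  exact dist_le_add_or_of_sbtw hδ hr hr₁ hr₂ hab hapb hpa.le hpb.le (mem_closedBall'.1 hpc)

variable {ι : Type*} {c : ι → E} {r : ι → ℝ} {δ : ℝ}

lemma closedBall_subset_layerUnion_three (hδ : 0 ≤ δ) (hr : ∀ i, δ ≤ r i)
    (hcover : ⋃ i, closedBall (c i) (r i) = univ)
    (hfin : ∀ i, {j | (closedBall (c j) (r j) ∩ closedBall (c i) (r i)).Nonempty}.Finite)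
    {i j : ι} {x y : E} (hx : x ∈ closedBall (c i) (r i)) (hy : y ∈ closedBall (c j) (r j))
    (hxy : dist x y ≤ δ) :
    closedBall (c j) (r j) ⊆ layerUnion (fun k => closedBall (c k) (r k)) i 3 := by
  have center_mem (k : ι) : c k ∈ closedBall (c k) (r k) := mem_closedBall_self (hδ.trans (hr k))
  have hij : dist (c i) (c j) ≤ r i + r j + δ := by
    linarith [dist_triangle4 (c i) x y (c j), mem_closedBall'.1 hx, mem_closedBall.1 hy]
  refine subset_layerUnion_three_of_isPreconnected (fun _ => isClosed_closedBall) (hfin i) (hfin j)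
    (convex_segment (c i) (c j)).isPreconnected ⟨c i, left_mem_segment ℝ _ _, center_mem i⟩
    ⟨c j, right_mem_segment ℝ _ _, center_mem j⟩ fun p hp => ?_
  obtain ⟨k, hpk⟩ := iUnion_eq_univ_iff.1 hcover p
  exact (closedBall_inter_nonempty_or_of_mem_segment hδ (hr k) (hr i) (hr j) hij hp hpk).imp
    (fun h => mem_layerUnion_succ.2 ⟨k, h, hpk⟩) (fun h => mem_layerUnion_succ.2 ⟨k, h, hpk⟩)

lemma mem_layerUnion_of_dist_le (hδ : 0 ≤ δ) (hr : ∀ i, δ ≤ r i)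
    (hcover : ⋃ i, closedBall (c i) (r i) = univ)
    (hfin : ∀ i, {j | (closedBall (c j) (r j) ∩ closedBall (c i) (r i)).Nonempty}.Finite)
    {y : E} (n : ℕ) {i : ι} {x : E} (hx : x ∈ closedBall (c i) (r i)) (hxy : dist x y ≤ n * δ) :
    y ∈ layerUnion (fun j => closedBall (c j) (r j)) i (3 * n) := by
  induction n generalizing i x with
  | zero =>
    obtain rfl : x = y := dist_le_zero.1 (by simpa using hxy)
    exact hx
  | succ n ih =>
    obtain ⟨z, hxz, hzy⟩ : ∃ z, dist x z ≤ δ ∧ dist z y ≤ n * δ :=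
      exists_dist_le_le hδ (by positivity) (by rwa [Nat.cast_succ, add_one_mul] at hxy)
    obtain ⟨j, hzj⟩ := iUnion_eq_univ_iff.1 hcover z
    have hj := closedBall_subset_layerUnion_three hδ hr hcover hfin hx hzj hxz
    rw [mul_add_one, add_comm]
    exact layerUnion_subset_layerUnion_add hj _ (ih hzj hzy)

theorem mem_layer_ceil_dist_general (hδ : 0 < δ) (hr : ∀ i, δ ≤ r i)
    (hcover : ⋃ i, closedBall (c i) (r i) = univ)
    (hfin : ∀ i, {j | (closedBall (c j) (r j) ∩ closedBall (c i) (r i)).Nonempty}.Finite)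
    {i : ι} {x : E} (hx : x ∈ closedBall (c i) (r i)) (y : E) :
    y ∈ layerUnion (fun j => closedBall (c j) (r j)) i (3 * ⌈dist x y / δ⌉₊) :=
  mem_layerUnion_of_dist_le hδ.le hr hcover hfin _ hx ((div_le_iff₀ hδ).1 (Nat.le_ceil _))

end Balls

section IsCover

variable {σ η : ℝ} {𝒞 : Set BallData}

lemma layerUnion_eq_layerU {Q : BallData} (hQ : Q ∈ 𝒞) (n : ℕ) :
    layerUnion (fun B : 𝒞 => closedBall B.1.1 B.1.2) ⟨Q, hQ⟩ n = layerU 𝒞 Q n := by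
  induction n with
  | zero => rfl
  | succ n ih =>
    ext x
    simp only [mem_layerUnion_succ, ih, layerU, ballSet, Subtype.exists, mem_iUnion, mem_ofPred_eq,
      exists_prop, and_assoc]

lemma IsCover.iUnion_eq_univ (h : IsCover σ η 𝒞) :
    ⋃ B : 𝒞, closedBall B.1.1 B.1.2 = univ := by
  refine iUnion_eq_univ_iff.2 fun x => ?_
  obtain ⟨B, hB, hxB⟩ := h.covers x
  exact ⟨⟨B, hB⟩, hxB⟩

lemma IsCover.finite_setOf_inter_nonempty (h : IsCover σ η 𝒞) (B : 𝒞) :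
    {B' : 𝒞 | (closedBall B'.1.1 B'.1.2 ∩ closedBall B.1.1 B.1.2).Nonempty}.Finite := by
  refine (((h.overlap_finite B B.2).preimage Subtype.val_injective.injOn).insert B).subset
    fun B' hB' => ?_
  rw [mem_ofPred_eq, inter_comm] at hB'
  exact or_iff_not_imp_left.2 fun hne => ⟨B'.2, Subtype.coe_ne_coe.2 hne, hB'⟩

end IsCover

/-- Corollary 3.2: if `x ∈ Q ∈ 𝒞` then every `y ∈ ℝ³` lies in `Q^{(4⌈|x−y|⌉)}`. -/
theorem mem_layer_ceil_dist (σ η : ℝ) (hσ : 0 < σ) (hη : 0 < η)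
    (𝒞 : Set BallData) (hcov : IsCover σ η 𝒞)
    (Q : BallData) (hQ : Q ∈ 𝒞) (x : E3) (hx : x ∈ ballSet Q) (y : E3) :
    y ∈ layerU 𝒞 Q (4 * ⌈dist x y⌉₊) := by
  rw [← layerUnion_eq_layerU hQ]
  exact monotone_layerUnion (Nat.mul_le_mul_right _ (Nat.le_succ 3)) <| by
    simpa only [div_one] using mem_layer_ceil_dist_general (i := ⟨Q, hQ⟩) one_pos
      (fun B : 𝒞 => hcov.radius_ge_one B B.2) hcov.iUnion_eq_univ
      hcov.finite_setOf_inter_nonempty hx y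

end
end
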